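/- Let k be an algebraically closed field of characteristic 0 and λ = (2^r, 1^{N−2r}) with 1 ≤ r and 2r ≤ N. Then the Zariski closure in Mat_N(k) of the set {x + y : x, y ∈ O_λ} equals the Zariski closure of the set of all matrices of the form g·D·g⁻¹, where g ∈ GL_N(k) and D is the diagonal matrix diag(μ₁, …, μ_r, 0, …, 0, −μ_r, …, −μ₁) with μ₁, …, μ_r ∈ k arbitrary; that is, CS(O_λ) is the closure of the union of GL_N-orbits through the r-dimensional toral subspace t_{O_λ}. -/

import Mathlib

open Matrix

noncomputable section

/-- The Zariski closure of a set of `N × N` matrices. -/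
def zClosure {k : Type*} [CommRing k] {N : ℕ}
    (S : Set (Matrix (Fin N) (Fin N) k)) : Set (Matrix (Fin N) (Fin N) k) :=
  {M | ∀ P : MvPolynomial (Fin N × Fin N) k,
      (∀ x ∈ S, MvPolynomial.eval (fun q => x q.1 q.2) P = 0) →
      MvPolynomial.eval (fun q => M q.1 q.2) P = 0}

/-- The set of nilpotent matrices of Jordan type `lam`. -/
def jordanOrbit (k : Type*) [Field k] (N : ℕ) {p : ℕ} (lam : Fin p → ℕ) :
    Set (Matrix (Fin N) (Fin N) k) :=
  {M | ∀ i : ℕ, 1 ≤ i → (M ^ i).rank = ∑ l, (lam l - i)}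

/-- The partition `(2^r, 1^{N-2r})` of `N`, with `N - r` parts. -/
def twoOneLam (N r : ℕ) : Fin (N - r) → ℕ := fun l => if (l : ℕ) < r then 2 else 1

/-- The diagonal vector `(μ₁, …, μ_r, 0, …, 0, −μ_r, …, −μ₁)` of length `N`. -/
def dvec {k : Type*} [Field k] (N r : ℕ) (μ : Fin r → k) : Fin N → k := fun i =>
  if h : (i : ℕ) < r then μ ⟨(i : ℕ), h⟩
  else if h2 : N - 1 - (i : ℕ) < r then -μ ⟨N - 1 - (i : ℕ), h2⟩
  else 0

/-
The `2 × 2` block identity `2 diag(m, -m) = [m, 1; -m², -m] + [m, -1; m², -m]` has two square-zero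
summands of rank `r`, so it writes every conjugate of `diag(μ, -μ) ⊕ 0` as a sum of two elements of
`O_λ`.

Conversely, write `x, y ∈ O_λ` as `x = AB` and `y = CE` with `BA = 0` and `EC = 0`. On the image of
`(A C)` the matrix `x + y` acts as the antidiagonal block matrix with blocks `BC` and `EA`, so it is
conjugate to `diag(μ, -μ) ⊕ 0`, where `μ²` are the eigenvalues of `BC · EA`, whenever these are
nonzero, pairwise distinct and have square roots in the field. For fixed `x` the elements
`y = g x g⁻¹` are parametrized by the irreducible variety `GL_N`. The eigenvalue condition holds for
some `g`, hence for the generic one, and the square roots exist over the algebraic closure of the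
function field. A polynomial that vanishes on the conjugates of the `diag(μ, -μ) ⊕ 0` over `k` still
does over that field, so it vanishes at the generic `x + y` and therefore at every `x + y`.
-/

section Frames

variable {k n κ : Type*} [Field k] [Fintype n] [DecidableEq κ]

theorem finrank_ker_toLin'_add_card_of_mul_eq_one [DecidableEq n] [Fintype κ] {P : Matrix n κ k}
    {Q : Matrix κ n k} (h : Q * P = 1) :
    Module.finrank k (LinearMap.ker (toLin' Q)) + Fintype.card κ = Fintype.card n := by
  have hsurj : Function.Surjective (toLin' Q) := fun v =>
    ⟨toLin' P v, by rw [← toLin'_mul_apply, h, toLin'_one, LinearMap.id_apply]⟩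
  have hrank := LinearMap.finrank_range_add_finrank_ker (toLin' Q)
  rw [LinearMap.range_eq_top.2 hsurj, finrank_top, Module.finrank_pi, Module.finrank_pi] at hrank
  omega

theorem exists_mul_eq_zero_and_ker_injective [Finite κ] {P P' : Matrix n κ k}
    {Q Q' : Matrix κ n k} (h : Q * P = 1) (h' : Q' * P' = 1) :
    ∃ F : Matrix n n k, F * P = 0 ∧ Q' * F = 0 ∧ ∀ v, Q *ᵥ v = 0 → F *ᵥ v = 0 → v = 0 := by
  classical
  have := Fintype.ofFinite κ
  have hQP (v : n → k) : toLin' Q (v - toLin' P (toLin' Q v)) = 0 := by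
    rw [map_sub, ← toLin'_mul_apply, h, toLin'_one, LinearMap.id_apply, sub_self]
  let e : LinearMap.ker (toLin' Q) ≃ₗ[k] LinearMap.ker (toLin' Q') :=
    LinearEquiv.ofFinrankEq _ _ (Nat.add_right_cancel
      ((finrank_ker_toLin'_add_card_of_mul_eq_one h).trans
        (finrank_ker_toLin'_add_card_of_mul_eq_one h').symm))
  let π : (n → k) →ₗ[k] LinearMap.ker (toLin' Q) :=
    (LinearMap.id - toLin' P ∘ₗ toLin' Q).codRestrict _ hQP
  let F : Matrix n n k := LinearMap.toMatrix' ((Submodule.subtype _) ∘ₗ e.toLinearMap ∘ₗ π)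
  have hπ (v : n → k) : (π v : n → k) = v - P *ᵥ (Q *ᵥ v) := rfl
  have hF (v : n → k) : F *ᵥ v = e (π v) := by
    rw [← toLin'_apply, toLin'_toMatrix']; rfl
  refine ⟨F, ?_, ?_, fun v hQv hFv => ?_⟩
  · refine ext_of_mulVec_single fun i => ?_
    have hπP : π (P *ᵥ Pi.single i 1) = 0 := Subtype.ext <| by
      rw [hπ, mulVec_mulVec _ Q, h, one_mulVec, sub_self, ZeroMemClass.coe_zero]
    rw [← mulVec_mulVec, hF, hπP, map_zero, zero_mulVec, ZeroMemClass.coe_zero]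
  · refine ext_of_mulVec_single fun i => ?_
    rw [← mulVec_mulVec, hF, zero_mulVec, ← toLin'_apply]
    exact (e _).2
  · have hπv := congrArg Subtype.val (e.map_eq_zero_iff.1 (Subtype.ext ((hF v).symm.trans hFv)))
    rwa [hπ, hQv, mulVec_zero, sub_zero] at hπv

-- `g` sends `P v` to `P' v` and identifies the complements `ker Q` and `ker Q'` of the images.
theorem exists_units_mul_eq_of_mul_eq_one [DecidableEq n] [Finite κ] {P P' : Matrix n κ k}
    {Q Q' : Matrix κ n k} (h : Q * P = 1) (h' : Q' * P' = 1) :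
    ∃ g : (Matrix n n k)ˣ, (g : Matrix n n k) * P = P' ∧ Q' * (g : Matrix n n k) = Q := by
  have := Fintype.ofFinite κ
  obtain ⟨F, hFP, hQF, hker⟩ := exists_mul_eq_zero_and_ker_injective h h'
  have hQ'g : Q' * (P' * Q + F) = Q := by
    rw [Matrix.mul_add, hQF, ← Matrix.mul_assoc, h', Matrix.one_mul, add_zero]
  have hinj : Function.Injective (P' * Q + F).mulVec := by
    refine (injective_iff_map_eq_zero (P' * Q + F).mulVecLin).2 fun v hv => ?_
    rw [mulVecLin_apply] at hv
    have hQv : Q *ᵥ v = 0 := by rw [← hQ'g, ← mulVec_mulVec, hv, mulVec_zero]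
    refine hker v hQv ?_
    rw [← hv, add_mulVec, ← mulVec_mulVec, hQv, mulVec_zero, zero_add]
  obtain ⟨g, hg⟩ := mulVec_injective_iff_isUnit.1 hinj
  refine ⟨g, ?_, hg ▸ hQ'g⟩
  rw [hg, Matrix.add_mul, hFP, Matrix.mul_assoc, h, Matrix.mul_one, add_zero]

end Frames

section ZeroExtensions

variable {k n κ κ' : Type*} [Field k] [Fintype n] [Fintype κ] [DecidableEq κ]

/-- `M` is conjugate to the block-diagonal matrix `X ⊕ 0`. The columns of `P` and the rows of `Q`
are the part of a conjugating matrix and of its inverse that belong to `X`. -/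
def IsConjZeroExtension (X : Matrix κ κ k) (M : Matrix n n k) : Prop :=
  ∃ (P : Matrix n κ k) (Q : Matrix κ n k), Q * P = 1 ∧ M = P * X * Q

namespace IsConjZeroExtension

variable {X : Matrix κ κ k} {M M' : Matrix n n k}

theorem trans [Fintype κ'] [DecidableEq κ'] {Y : Matrix κ' κ' k} (hXY : IsConjZeroExtension X Y)
    (hYM : IsConjZeroExtension Y M) : IsConjZeroExtension X M := by
  obtain ⟨P, Q, hQP, rfl⟩ := hXY
  obtain ⟨P', Q', hQP', rfl⟩ := hYM
  refine ⟨P' * P, Q * Q', ?_, by simp only [Matrix.mul_assoc]⟩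
  rw [Matrix.mul_assoc, ← Matrix.mul_assoc Q', hQP', Matrix.one_mul, hQP]

variable [DecidableEq n]

theorem units_conj (h : IsConjZeroExtension X M) (g : (Matrix n n k)ˣ) :
    IsConjZeroExtension X (g.val * M * (g⁻¹).val) := by
  obtain ⟨P, Q, hQP, rfl⟩ := h
  refine ⟨g.val * P, Q * (g⁻¹).val, ?_, by simp only [Matrix.mul_assoc]⟩
  rw [Matrix.mul_assoc, ← Matrix.mul_assoc _ _ P, Units.inv_mul, Matrix.one_mul, hQP]

theorem exists_eq_units_conj (h : IsConjZeroExtension X M) (h' : IsConjZeroExtension X M') :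
    ∃ g : (Matrix n n k)ˣ, M' = g.val * M * (g⁻¹).val := by
  obtain ⟨P, Q, hQP, rfl⟩ := h
  obtain ⟨P', Q', hQP', rfl⟩ := h'
  obtain ⟨g, hP, hQ⟩ := exists_units_mul_eq_of_mul_eq_one hQP hQP'
  refine ⟨g, ?_⟩
  rw [← hP, ← hQ]
  simp only [Matrix.mul_assoc, Units.mul_inv, Matrix.mul_one]

end IsConjZeroExtension

/-- The block-diagonal matrix `X ⊕ 0`, where `X` sits in the rows and columns selected by `e`. -/
def zeroExtension {R : Type*} [CommRing R] [DecidableEq n] (e : κ ↪ n) (X : Matrix κ κ R) :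
    Matrix n n R :=
  (1 : Matrix n n R).submatrix id e * X * (1 : Matrix n n R).submatrix e id

omit [Fintype n] [DecidableEq κ] in
theorem map_zeroExtension {R S : Type*} [CommRing R] [CommRing S] [DecidableEq n] (f : R →+* S)
    (e : κ ↪ n) (X : Matrix κ κ R) : (zeroExtension e X).map f = zeroExtension e (X.map f) := by
  simp only [zeroExtension, Matrix.map_mul, ← submatrix_map, Matrix.map_one f f.map_zero f.map_one]

omit [Fintype n] in
theorem zeroExtension_diagonal {R : Type*} [CommRing R] [DecidableEq n] (e : κ ↪ n) (d : κ → R) :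
    zeroExtension e (diagonal d) = diagonal (Function.extend e d 0) := by
  ext i j
  rw [zeroExtension, Matrix.mul_apply]
  simp only [mul_diagonal, submatrix_apply, id, one_apply, ite_mul, one_mul, zero_mul]
  by_cases hi : i ∈ Set.range e
  · obtain ⟨a, rfl⟩ := hi
    simp [diagonal_apply, e.injective.extend_apply]
  · have hne (a : κ) : i ≠ e a := fun h => hi ⟨a, h.symm⟩
    simp [diagonal_apply, Function.extend_apply' _ _ _ hi, hne]

theorem isConjZeroExtension_zeroExtension [DecidableEq n] (e : κ ↪ n) (X : Matrix κ κ k) :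
    IsConjZeroExtension X (zeroExtension e X) :=
  ⟨_, _, by rw [← submatrix_mul _ _ _ _ _ Function.bijective_id, Matrix.one_mul,
    submatrix_one e e.injective], rfl⟩

theorem isConjZeroExtension_iff_exists_units [DecidableEq n] {X : Matrix κ κ k} {M : Matrix n n k}
    (e : κ ↪ n) :
    IsConjZeroExtension X M ↔
      ∃ g : (Matrix n n k)ˣ, M = g.val * zeroExtension e X * (g⁻¹).val := by
  refine ⟨(isConjZeroExtension_zeroExtension e X).exists_eq_units_conj, ?_⟩
  rintro ⟨g, rfl⟩
  exact (isConjZeroExtension_zeroExtension e X).units_conj g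

end ZeroExtensions

section SquareZero

variable {k m n ι : Type*} [Field k] [Fintype m] [Fintype n] [DecidableEq ι]

theorem fromRows_mul_fromCols_eq_one_iff {B₁ B₂ : Matrix ι n k} {A₁ A₂ : Matrix n ι k} :
    fromRows B₁ B₂ * fromCols A₁ A₂ = 1 ↔
      B₁ * A₁ = 1 ∧ B₁ * A₂ = 0 ∧ B₂ * A₁ = 0 ∧ B₂ * A₂ = 1 := by
  rw [fromRows_mul_fromCols, ← fromBlocks_one, fromBlocks_inj]

/-- The block matrix with square zero and rank `|ι|`, the Jordan type `(2^|ι|)`. -/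
def squareZeroBlock (ι k : Type*) [DecidableEq ι] [Field k] : Matrix (ι ⊕ ι) (ι ⊕ ι) k :=
  fromBlocks 0 1 0 0

variable [Fintype ι]

theorem isConjZeroExtension_squareZeroBlock_iff_exists_mul {x : Matrix n n k} :
    IsConjZeroExtension (squareZeroBlock ι k) x ↔
      ∃ (A F : Matrix n ι k) (G B : Matrix ι n k),
        fromRows G B * fromCols A F = 1 ∧ x = A * B := by
  have hmul (A F : Matrix n ι k) (G B : Matrix ι n k) :
      fromCols A F * squareZeroBlock ι k * fromRows G B = A * B := by
    simp only [squareZeroBlock, fromCols_mul_fromBlocks, fromCols_mul_fromRows, Matrix.mul_zero,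
      Matrix.mul_one, Matrix.zero_mul, add_zero, zero_add]
  constructor
  · rintro ⟨P, Q, hQP, rfl⟩
    rw [← fromCols_toCols P, ← fromRows_toRows Q] at hQP ⊢
    exact ⟨_, _, _, _, hQP, hmul _ _ _ _⟩
  · rintro ⟨A, F, G, B, h, rfl⟩
    exact ⟨_, _, h, (hmul A F G B).symm⟩

theorem exists_rank_factorization (x : Matrix m n k) (hx : x.rank = Fintype.card ι) :
    ∃ (A : Matrix m ι k) (B : Matrix ι n k) (A' : Matrix ι m k) (B' : Matrix n ι k),
      x = A * B ∧ A' * A = 1 ∧ B * B' = 1 := by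
  classical
  let e : LinearMap.range (toLin' x) ≃ₗ[k] (ι → k) :=
    LinearEquiv.ofFinrankEq _ _ (hx.trans (Module.finrank_pi k).symm)
  let α : (ι → k) →ₗ[k] m → k := Submodule.subtype _ ∘ₗ e.symm.toLinearMap
  let β : (n → k) →ₗ[k] ι → k := e.toLinearMap ∘ₗ (toLin' x).rangeRestrict
  have hαβ : α ∘ₗ β = toLin' x := LinearMap.ext fun v => by
    simp [α, β]
  obtain ⟨α', hα'⟩ := α.exists_leftInverse_of_injective <| LinearMap.ker_eq_bot.2 <|
    Subtype.val_injective.comp e.symm.injective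
  obtain ⟨β', hβ'⟩ := β.exists_rightInverse_of_surjective <| LinearMap.range_eq_top.2 <|
    e.surjective.comp (toLin' x).surjective_rangeRestrict
  refine ⟨LinearMap.toMatrix' α, LinearMap.toMatrix' β, LinearMap.toMatrix' α',
    LinearMap.toMatrix' β', ?_, ?_, ?_⟩
  · rw [← LinearMap.toMatrix'_comp, hαβ, LinearMap.toMatrix'_toLin']
  · rw [← LinearMap.toMatrix'_comp, hα', LinearMap.toMatrix'_id]
  · rw [← LinearMap.toMatrix'_comp, hβ', LinearMap.toMatrix'_id]

theorem rank_mul_eq_card {A : Matrix m ι k} {B : Matrix ι n k} {A' : Matrix ι m k}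
    {B' : Matrix n ι k} (hA : A' * A = 1) (hB : B * B' = 1) : (A * B).rank = Fintype.card ι := by
  refine le_antisymm ((rank_mul_le_left A B).trans A.rank_le_card_width) ?_
  calc Fintype.card ι = (A' * A * (B * B')).rank := by rw [hA, hB, Matrix.one_mul, rank_one]
    _ = (A' * (A * B) * B').rank := by simp only [Matrix.mul_assoc]
    _ ≤ (A * B).rank := (rank_mul_le_left _ _).trans (rank_mul_le_right _ _)

theorem isConjZeroExtension_squareZeroBlock_iff {x : Matrix n n k} :
    IsConjZeroExtension (squareZeroBlock ι k) x ↔ x.rank = Fintype.card ι ∧ x * x = 0 := by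
  rw [isConjZeroExtension_squareZeroBlock_iff_exists_mul]
  constructor
  · rintro ⟨A, F, G, B, h, rfl⟩
    obtain ⟨hGA, -, hBA, hBF⟩ := fromRows_mul_fromCols_eq_one_iff.1 h
    refine ⟨rank_mul_eq_card hGA hBF, ?_⟩
    rw [Matrix.mul_assoc, ← Matrix.mul_assoc B, hBA, Matrix.zero_mul, Matrix.mul_zero]
  · rintro ⟨hrank, hsq⟩
    obtain ⟨A, B, A', B', rfl, hA, hB⟩ := exists_rank_factorization (ι := ι) x hrank
    have hBA : B * A = 0 :=
      calc B * A = A' * A * (B * A) * (B * B') := by rw [hA, hB, Matrix.one_mul, Matrix.mul_one]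
        _ = A' * (A * B * (A * B)) * B' := by simp only [Matrix.mul_assoc]
        _ = 0 := by rw [hsq, Matrix.mul_zero, Matrix.zero_mul]
    refine ⟨A, B', A' - A' * B' * B, B, fromRows_mul_fromCols_eq_one_iff.2 ⟨?_, ?_, hBA, hB⟩, rfl⟩
    · rw [Matrix.sub_mul, Matrix.mul_assoc _ B A, hBA, Matrix.mul_zero, sub_zero, hA]
    · rw [Matrix.sub_mul, Matrix.mul_assoc _ B B', hB, Matrix.mul_one, sub_self]

end SquareZero

section JordanOrbit

variable {k : Type*} [Field k] {N r : ℕ}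

theorem sum_twoOneLam_sub_one (h2r : 2 * r ≤ N) : ∑ l, (twoOneLam N r l - 1) = r := by
  have hpart (l : Fin (N - r)) : twoOneLam N r l - 1 = if (l : ℕ) < r then 1 else 0 := by
    unfold twoOneLam; split_ifs <;> rfl
  have hfilter : (Finset.range (N - r)).filter (· < r) = Finset.range r := by
    ext a; simp only [Finset.mem_filter, Finset.mem_range]; omega
  simp only [hpart]
  rw [Fin.sum_univ_eq_sum_range (fun l => if l < r then 1 else 0) (N - r), ← Finset.sum_filter,
    hfilter, Finset.sum_const, Finset.card_range, smul_eq_mul, mul_one]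

theorem sum_twoOneLam_sub_eq_zero {i : ℕ} (hi : 2 ≤ i) : ∑ l, (twoOneLam N r l - i) = 0 := by
  refine Finset.sum_eq_zero fun l _ => ?_
  unfold twoOneLam; split_ifs <;> omega

theorem mem_jordanOrbit_twoOneLam_iff (h2r : 2 * r ≤ N) {x : Matrix (Fin N) (Fin N) k} :
    x ∈ jordanOrbit k N (twoOneLam N r) ↔ x.rank = r ∧ x * x = 0 := by
  constructor
  · intro hx
    refine ⟨by simpa only [pow_one, sum_twoOneLam_sub_one h2r] using hx 1 le_rfl, ?_⟩
    have hrank := hx 2 one_le_two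
    rw [sum_twoOneLam_sub_eq_zero le_rfl, Matrix.rank, Submodule.finrank_eq_zero,
      LinearMap.range_eq_bot, ← toLin'_apply', map_eq_zero_iff _ toLin'.injective] at hrank
    rw [← pow_two, hrank]
  · rintro ⟨hr, hx⟩ i hi
    rcases eq_or_lt_of_le hi with rfl | hi
    · rw [pow_one, hr, sum_twoOneLam_sub_one h2r]
    · rw [sum_twoOneLam_sub_eq_zero hi, pow_eq_zero_of_le hi (by rw [pow_two, hx]), rank_zero]

theorem mem_jordanOrbit_iff_isConjZeroExtension (h2r : 2 * r ≤ N) {x : Matrix (Fin N) (Fin N) k} :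
    x ∈ jordanOrbit k N (twoOneLam N r) ↔ IsConjZeroExtension (squareZeroBlock (Fin r) k) x := by
  rw [mem_jordanOrbit_twoOneLam_iff h2r, isConjZeroExtension_squareZeroBlock_iff, Fintype.card_fin]

end JordanOrbit

section SignedDiagonal

variable {k n ι R : Type*} [Field k] [Fintype n] [DecidableEq ι]

/-- The block-diagonal matrix `diag(μ, -μ)`. -/
def signedDiagonal [CommRing R] (μ : ι → R) : Matrix (ι ⊕ ι) (ι ⊕ ι) R :=
  diagonal (Sum.elim μ (-μ))

theorem signedDiagonal_eq_fromBlocks [CommRing R] (μ : ι → R) :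
    signedDiagonal μ = fromBlocks (diagonal μ) 0 0 (-diagonal μ) := by
  rw [signedDiagonal, diagonal_neg, fromBlocks_diagonal]; rfl

theorem signedDiagonal_smul [CommRing R] (c : R) (μ : ι → R) :
    signedDiagonal (c • μ) = c • signedDiagonal μ := by
  rw [signedDiagonal, signedDiagonal, ← diagonal_smul]
  congr 1; ext (i | i) <;> simp

theorem map_signedDiagonal {S : Type*} [CommRing R] [CommRing S] (f : R →+* S) (μ : ι → R) :
    (signedDiagonal μ).map f = signedDiagonal (f ∘ μ) := by
  rw [signedDiagonal, signedDiagonal, diagonal_map f.map_zero]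
  congr 1; ext (i | i) <;> simp

/-- With `m = diag(μ / 2)`,
`[m, 0; 0, -m] + [m, 0; 0, -m] = [m, 1; -m², -m] + [m, -1; m², -m]`. -/
theorem exists_add_eq_of_isConjZeroExtension_signedDiagonal [Fintype ι] [NeZero (2 : k)]
    {μ : ι → k} {M : Matrix n n k} (h : IsConjZeroExtension (signedDiagonal μ) M) :
    ∃ x y, IsConjZeroExtension (squareZeroBlock ι k) x ∧
      IsConjZeroExtension (squareZeroBlock ι k) y ∧ x + y = M := by
  obtain ⟨P, Q, hQP, rfl⟩ := h
  set m : Matrix ι ι k := diagonal ((2 : k)⁻¹ • μ) with hm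
  have hmm : m + m = diagonal μ := by
    rw [hm, diagonal_smul, ← add_smul, ← two_mul, mul_inv_cancel₀ two_ne_zero, one_smul]
  have hx : IsConjZeroExtension (squareZeroBlock ι k) (fromBlocks m 1 (-(m * m)) (-m)) := by
    refine ⟨fromBlocks 1 0 (-m) 1, fromBlocks 1 0 m 1, ?_, ?_⟩ <;>
      simp [squareZeroBlock, fromBlocks_multiply]
  have hy : IsConjZeroExtension (squareZeroBlock ι k) (fromBlocks m (-1) (m * m) (-m)) := by
    refine ⟨fromBlocks 1 0 m (-1), fromBlocks 1 0 m (-1), ?_, ?_⟩ <;>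
      simp [squareZeroBlock, fromBlocks_multiply]
  refine ⟨_, _, hx.trans ⟨P, Q, hQP, rfl⟩, hy.trans ⟨P, Q, hQP, rfl⟩, ?_⟩
  rw [← Matrix.add_mul, ← Matrix.mul_add, fromBlocks_add, signedDiagonal_eq_fromBlocks, ← hmm]
  simp only [add_neg_cancel, neg_add_cancel, neg_add]

end SignedDiagonal

section ToralConjugates

variable {k : Type*} [Field k] {N r : ℕ}

/-- The positions in `Fin N` of the entries `μ` and `-μ` of `dvec N r μ`. -/
def outerEmb (h2r : 2 * r ≤ N) : Fin r ⊕ Fin r ↪ Fin N where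
  toFun := Sum.elim (fun i => ⟨i, by omega⟩) (fun i => ⟨N - 1 - i, by omega⟩)
  inj' := by
    rintro (i | i) (j | j) h <;> simp only [Sum.elim_inl, Sum.elim_inr, Fin.mk.injEq] at h
    · exact congrArg _ (Fin.ext h)
    · omega
    · omega
    · exact congrArg _ (Fin.ext (by omega))

theorem dvec_eq_extend (h2r : 2 * r ≤ N) (μ : Fin r → k) :
    dvec N r μ = Function.extend (outerEmb h2r) (Sum.elim μ (-μ)) 0 := by
  ext a
  by_cases ha : a ∈ Set.range (outerEmb h2r)
  · obtain ⟨i | i, rfl⟩ := ha <;> rw [(outerEmb h2r).injective.extend_apply]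
    · have hi : (outerEmb h2r (Sum.inl i) : ℕ) = i := rfl
      simp [dvec, hi]
    · have hi : (outerEmb h2r (Sum.inr i) : ℕ) = N - 1 - i := rfl
      have hge : ¬ N - 1 - (i : ℕ) < r := by omega
      have hrev : N - 1 - (N - 1 - (i : ℕ)) = i := by omega
      simp [dvec, hi, hge, hrev]
  · have hlt : ¬ (a : ℕ) < r := fun h => ha ⟨Sum.inl ⟨a, h⟩, rfl⟩
    have hrev : ¬ N - 1 - (a : ℕ) < r := fun h =>
      ha ⟨Sum.inr ⟨N - 1 - a, h⟩, Fin.ext (show N - 1 - (N - 1 - (a : ℕ)) = a by omega)⟩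
    rw [Function.extend_apply' _ _ _ ha, Pi.zero_apply, dvec, dif_neg hlt, dif_neg hrev]

theorem diagonal_dvec (h2r : 2 * r ≤ N) (μ : Fin r → k) :
    diagonal (dvec N r μ) = zeroExtension (outerEmb h2r) (signedDiagonal μ) := by
  rw [signedDiagonal, zeroExtension_diagonal, dvec_eq_extend h2r]

/-- The union of the `GL_N`-conjugates of the diagonal matrices `diag(μ, 0, -μ)`. -/
def toralConjugates (k : Type*) [Field k] (N r : ℕ) : Set (Matrix (Fin N) (Fin N) k) :=
  {M | ∃ g : (Matrix (Fin N) (Fin N) k)ˣ, ∃ μ : Fin r → k,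
    M = g.val * diagonal (dvec N r μ) * (g⁻¹).val}

theorem mem_toralConjugates_iff (h2r : 2 * r ≤ N) {M : Matrix (Fin N) (Fin N) k} :
    M ∈ toralConjugates k N r ↔ ∃ μ : Fin r → k, IsConjZeroExtension (signedDiagonal μ) M := by
  simp only [toralConjugates, Set.mem_ofPred_eq, diagonal_dvec h2r,
    isConjZeroExtension_iff_exists_units (outerEmb h2r)]
  exact exists_comm

theorem toralConjugates_subset_image2_add [NeZero (2 : k)] (h2r : 2 * r ≤ N) :
    toralConjugates k N r ⊆ Set.image2 (· + ·) (jordanOrbit k N (twoOneLam N r))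
      (jordanOrbit k N (twoOneLam N r)) := by
  intro M hM
  obtain ⟨μ, hμ⟩ := (mem_toralConjugates_iff h2r).1 hM
  obtain ⟨x, y, hx, hy, rfl⟩ := exists_add_eq_of_isConjZeroExtension_signedDiagonal hμ
  exact Set.mem_image2_of_mem ((mem_jordanOrbit_iff_isConjZeroExtension h2r).2 hx)
    ((mem_jordanOrbit_iff_isConjZeroExtension h2r).2 hy)

end ToralConjugates

section Diagonalization

variable {k n ι : Type*} [Field k] [Fintype n] [Fintype ι] [DecidableEq ι]

theorem exists_isUnit_mul_eq_mul_diagonal {Z : Matrix ι ι k} (hsplits : Z.charpoly.Splits)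
    (hsep : Z.charpoly.Separable) :
    ∃ (T : Matrix ι ι k) (ν : ι → k), IsUnit T ∧ Z * T = T * diagonal ν := by
  classical
  have hcard := Polynomial.card_rootSet_eq_natDegree (K := k) hsep
    (by rwa [Algebra.algebraMap_self, Polynomial.map_id])
  rw [charpoly_natDegree_eq_dim] at hcard
  let ν : ι → Z.charpoly.rootSet k := Fintype.equivOfCardEq hcard.symm
  have hν : Function.Injective fun i => (ν i : k) :=
    Subtype.val_injective.comp (Fintype.equivOfCardEq hcard.symm).injective
  have heigen (i : ι) : Module.End.HasEigenvalue (toLin' Z) (ν i : k) := by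
    rw [Module.End.hasEigenvalue_iff_isRoot_charpoly, charpoly_toLin']
    simpa only [Polynomial.IsRoot, Polynomial.coe_aeval_eq_eval] using
      (Polynomial.mem_rootSet.1 (ν i).2).2
  choose v hv using fun i => (heigen i).exists_hasEigenvector
  refine ⟨of fun i j => v j i, fun i => ν i, linearIndependent_cols_iff_isUnit.1
    (Module.End.eigenvectors_linearIndependent' _ _ hν v hv), ?_⟩
  ext i j
  rw [mul_diagonal, of_apply, mul_comm]
  exact congrFun (hv j).apply_eq_smul i

theorem isConjZeroExtension_signedDiagonal_antidiagonal [NeZero (2 : k)] (μ : ι → k) :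
    IsConjZeroExtension (signedDiagonal μ) (fromBlocks 0 (diagonal μ) (diagonal μ) 0) := by
  have half_add_half : (2⁻¹ : k) + 2⁻¹ = 1 := by rw [← two_mul, mul_inv_cancel₀ two_ne_zero]
  refine ⟨fromBlocks 1 1 1 (-1), (2⁻¹ : k) • fromBlocks 1 1 1 (-1), ?_, ?_⟩
  · rw [smul_mul, fromBlocks_multiply, fromBlocks_smul, ← fromBlocks_one]
    simp [← add_smul, half_add_half]
  · rw [Matrix.mul_smul, signedDiagonal_eq_fromBlocks, fromBlocks_multiply, fromBlocks_multiply,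
      fromBlocks_smul]
    generalize diagonal μ = D
    simp [smul_add, ← add_smul, half_add_half]

/-- With `Q = Y T diag(μ)⁻¹`, conjugation by `T ⊕ Q` turns `X` and `Y` into `diag(μ)`. -/
theorem isConjZeroExtension_signedDiagonal_fromBlocks [NeZero (2 : k)] {X Y T : Matrix ι ι k}
    {μ : ι → k} (hμ : IsUnit μ) (hT : IsUnit T) (h : X * Y * T = T * diagonal (μ ^ 2)) :
    IsConjZeroExtension (signedDiagonal μ) (fromBlocks 0 X Y 0) := by
  obtain ⟨T', -, hT'T⟩ := isUnit_iff_exists.1 hT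
  obtain ⟨D', hDD', hD'D⟩ := isUnit_iff_exists.1 (isUnit_diagonal.2 hμ)
  set D : Matrix ι ι k := diagonal μ with hD
  set Q : Matrix ι ι k := Y * T * D' with hQ
  have hQD : Q * D = Y * T := by rw [hQ, Matrix.mul_assoc, hD'D, Matrix.mul_one]
  have hXQ : X * Q = T * D := by
    rw [hQ, ← Matrix.mul_assoc, ← Matrix.mul_assoc, h, ← diagonal_pow, ← hD, pow_two,
      Matrix.mul_assoc, Matrix.mul_assoc D, hDD', Matrix.mul_one]
  set Q' : Matrix ι ι k := D' * T' * X with hQ'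
  have hQ'Q : Q' * Q = 1 := by
    rw [hQ', Matrix.mul_assoc, hXQ, Matrix.mul_assoc, ← Matrix.mul_assoc T', hT'T, Matrix.one_mul,
      hD'D]
  have hinv : fromBlocks T' 0 0 Q' * fromBlocks T 0 0 Q = 1 := by
    simp [fromBlocks_multiply, hT'T, hQ'Q]
  refine (isConjZeroExtension_signedDiagonal_antidiagonal μ).trans ⟨_, _, hinv, ?_⟩
  calc fromBlocks 0 X Y 0 = fromBlocks 0 X Y 0 * fromBlocks T 0 0 Q * fromBlocks T' 0 0 Q' := by
        rw [Matrix.mul_assoc, mul_eq_one_comm.1 hinv, Matrix.mul_one]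
    _ = fromBlocks T 0 0 Q * fromBlocks 0 D D 0 * fromBlocks T' 0 0 Q' := by
        simp [fromBlocks_multiply, hXQ, hQD]

theorem isUnit_fromBlocks_zero_of_isUnit_mul {X Y : Matrix ι ι k} (h : IsUnit (X * Y)) :
    IsUnit (fromBlocks 0 X Y 0) := by
  obtain ⟨Z, hXYZ, -⟩ := isUnit_iff_exists.1 h
  rw [Matrix.mul_assoc] at hXYZ
  have hYZX : Y * (Z * X) = 1 := by rw [← Matrix.mul_assoc, mul_eq_one_comm.1 hXYZ]
  exact IsUnit.of_mul_eq_one (fromBlocks 0 (Z * X) (Y * Z) 0)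
    (by simp [fromBlocks_multiply, hXYZ, hYZX])

theorem isConjZeroExtension_mul_comm {κ : Type*} [Fintype κ] [DecidableEq κ] {U : Matrix n κ k}
    {W : Matrix κ n k} (h : IsUnit (W * U)) : IsConjZeroExtension (W * U) (U * W) := by
  have hdet := (isUnit_iff_isUnit_det _).1 h
  refine ⟨U, (W * U)⁻¹ * W, ?_, ?_⟩
  · rw [Matrix.mul_assoc, nonsing_inv_mul _ hdet]
  · rw [Matrix.mul_assoc, mul_nonsing_inv_cancel_left _ _ hdet]

theorem exists_isConjZeroExtension_signedDiagonal_mul_add_mul [IsAlgClosed k] [NeZero (2 : k)]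
    {A C : Matrix n ι k} {B E : Matrix ι n k} (hBA : B * A = 0) (hEC : E * C = 0)
    (hunit : IsUnit (B * C * (E * A))) (hsep : (B * C * (E * A)).charpoly.Separable) :
    ∃ μ : ι → k, IsConjZeroExtension (signedDiagonal μ) (A * B + C * E) := by
  obtain ⟨T, ν, hT, hν⟩ := exists_isUnit_mul_eq_mul_diagonal (IsAlgClosed.splits _) hsep
  choose μ hμ using fun i => IsAlgClosed.exists_pow_nat_eq (ν i) two_pos
  have hdiag : diagonal (μ ^ 2) = diagonal ν := congrArg _ (funext hμ)
  have hμunit : IsUnit μ := by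
    have hprod := hunit.mul hT
    rw [hν, ← hdiag, IsUnit.mul_iff, isUnit_diagonal, isUnit_pow_iff two_ne_zero] at hprod
    exact hprod.2
  have hWU : fromRows B E * fromCols A C = fromBlocks 0 (B * C) (E * A) 0 := by
    rw [fromRows_mul_fromCols, hBA, hEC]
  refine ⟨μ, ?_⟩
  rw [← fromCols_mul_fromRows]
  refine .trans ?_ (isConjZeroExtension_mul_comm ?_)
  · rw [hWU]
    exact isConjZeroExtension_signedDiagonal_fromBlocks hμunit hT (hν.trans (by rw [hdiag]))
  · rw [hWU]
    exact isUnit_fromBlocks_zero_of_isUnit_mul hunit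

end Diagonalization

section Separability

open Polynomial

theorem separable_iff_isUnit_resultant {R : Type*} [CommRing R] {f : R[X]} (hf : f.Monic) :
    f.Separable ↔ IsUnit (f.resultant (derivative f) f.natDegree f.natDegree) := by
  obtain ⟨d, hd⟩ := Nat.exists_eq_add_of_le
    ((natDegree_derivative_le f).trans (Nat.sub_le f.natDegree 1))
  have hpad := resultant_add_right_deg f (derivative f) f.natDegree _ d le_rfl
  rw [← hd, hf.coeff_natDegree, one_pow, one_mul] at hpad
  rw [Polynomial.Separable, ← isUnit_resultant_iff_isCoprime hf, hpad]

theorem separable_map_of_injective {R F L : Type*} [CommRing R] [Field F] [Field L]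
    {φ : R →+* F} (hφ : Function.Injective φ) (ψ : R →+* L) {f : R[X]} (hf : f.Monic)
    (hsep : (f.map ψ).Separable) : (f.map φ).Separable := by
  rw [separable_iff_isUnit_resultant (hf.map _), derivative_map, hf.natDegree_map,
    resultant_map_map, isUnit_iff_ne_zero] at hsep ⊢
  rw [Ne, map_eq_zero_iff _ hφ]
  exact fun h => hsep (by rw [h, map_zero])

end Separability

section BaseChange

variable {n ι : Type*} [Fintype n] [DecidableEq n] [Fintype ι] [DecidableEq ι]

/-- The matrix `G (diag(μ, -μ) ⊕ 0) adj(G)`. The adjugate makes it polynomial in `G` and `μ`, and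
for invertible `G` it replaces `G⁻¹` at the cost of rescaling `μ`. -/
def toralPoint {R : Type*} [CommRing R] (e : ι ⊕ ι ↪ n) (G : Matrix n n R) (μ : ι → R) :
    Matrix n n R :=
  G * zeroExtension e (signedDiagonal μ) * G.adjugate

theorem map_toralPoint {R S : Type*} [CommRing R] [CommRing S] (f : R →+* S) (e : ι ⊕ ι ↪ n)
    (G : Matrix n n R) (μ : ι → R) :
    (toralPoint e G μ).map f = toralPoint e (G.map f) (f ∘ μ) := by
  have hadj : G.adjugate.map f = (G.map f).adjugate := f.map_adjugate G
  rw [toralPoint, Matrix.map_mul, Matrix.map_mul, map_zeroExtension, map_signedDiagonal, hadj,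
    toralPoint]

variable {k K : Type*} [Field k] [Field K]

omit [Fintype ι] [DecidableEq ι] in
theorem adjugate_units (g : (Matrix n n k)ˣ) : g.val.adjugate = g.val.det • (g⁻¹).val := by
  have hdet := (isUnit_iff_isUnit_det _).1 g.isUnit
  rw [coe_units_inv, inv_def, smul_smul, Ring.mul_inverse_cancel _ hdet, one_smul]

theorem toralPoint_units (e : ι ⊕ ι ↪ n) (g : (Matrix n n k)ˣ) (μ : ι → k) :
    toralPoint e g μ =
      g.val * zeroExtension e (signedDiagonal (g.val.det • μ)) * (g⁻¹).val := by
  rw [toralPoint, adjugate_units, signedDiagonal_smul]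
  simp only [zeroExtension, Matrix.mul_smul, Matrix.smul_mul]

theorem isConjZeroExtension_toralPoint_units (e : ι ⊕ ι ↪ n) (g : (Matrix n n k)ˣ) (μ : ι → k) :
    IsConjZeroExtension (signedDiagonal (g.val.det • μ)) (toralPoint e g μ) :=
  (isConjZeroExtension_iff_exists_units e).2 ⟨g, toralPoint_units e g μ⟩

theorem exists_eq_toralPoint_units (e : ι ⊕ ι ↪ n) {μ : ι → k} {M : Matrix n n k}
    (h : IsConjZeroExtension (signedDiagonal μ) M) :
    ∃ (g : (Matrix n n k)ˣ) (μ' : ι → k), M = toralPoint e g μ' := by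
  obtain ⟨g, rfl⟩ := (isConjZeroExtension_iff_exists_units e).1 h
  refine ⟨g, g.val.det⁻¹ • μ, ?_⟩
  rw [toralPoint_units, smul_inv_smul₀ ((isUnit_iff_isUnit_det _).1 g.isUnit).ne_zero]

omit [Fintype n] [DecidableEq n] in
theorem map_aeval_entries {R S : Type*} [CommRing R] [CommRing S] [Algebra k R] [Algebra k S]
    (f : R →ₐ[k] S) (M : Matrix n n R) (P : MvPolynomial (n × n) k) :
    f (MvPolynomial.aeval (fun q => M q.1 q.2) P) =
      MvPolynomial.aeval (fun q => M.map f q.1 q.2) P :=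
  MvPolynomial.comp_aeval_apply _ f P

/-- The polynomial `det G * P (toralPoint e G μ)` in the entries of a generic matrix `G` and a
generic vector `μ`. The factor `det G` makes it vanish at the singular matrices. -/
def genericToralValue (e : ι ⊕ ι ↪ n) (P : MvPolynomial (n × n) k) :
    MvPolynomial ((n × n) ⊕ ι) k :=
  let G : Matrix n n (MvPolynomial ((n × n) ⊕ ι) k) := of fun i j => MvPolynomial.X (.inl (i, j))
  G.det * MvPolynomial.aeval
    (fun q => toralPoint e G (fun i => MvPolynomial.X (.inr i)) q.1 q.2) P

theorem aeval_genericToralValue [Algebra k K] (e : ι ⊕ ι ↪ n) (P : MvPolynomial (n × n) k)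
    (z : (n × n) ⊕ ι → K) :
    MvPolynomial.aeval z (genericToralValue e P) =
      (of fun i j => z (.inl (i, j))).det * MvPolynomial.aeval
        (fun q => toralPoint e (of fun i j => z (.inl (i, j))) (z ∘ .inr) q.1 q.2) P := by
  set G : Matrix n n (MvPolynomial ((n × n) ⊕ ι) k) :=
    of fun i j => MvPolynomial.X (.inl (i, j)) with hG
  set μ : ι → MvPolynomial ((n × n) ⊕ ι) k := fun i => MvPolynomial.X (.inr i) with hμ
  have hmapG : G.map (MvPolynomial.aeval z) = of fun i j => z (.inl (i, j)) := by
    ext; simp [hG]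
  have hmapμ : MvPolynomial.aeval z ∘ μ = z ∘ .inr := by
    ext; simp [hμ]
  have hpoint : (toralPoint e G μ).map (MvPolynomial.aeval z) =
      toralPoint e (of fun i j => z (.inl (i, j))) (z ∘ .inr) :=
    (map_toralPoint (MvPolynomial.aeval z).toRingHom e G μ).trans (congrArg₂ _ hmapG hmapμ)
  rw [genericToralValue, map_mul, map_aeval_entries, AlgHom.map_det, AlgHom.mapMatrix_apply, hmapG,
    hpoint]

theorem genericToralValue_eq_zero [Infinite k] (e : ι ⊕ ι ↪ n) {P : MvPolynomial (n × n) k}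
    (hP : ∀ (μ : ι → k) (M : Matrix n n k), IsConjZeroExtension (signedDiagonal μ) M →
      MvPolynomial.eval (fun q => M q.1 q.2) P = 0) :
    genericToralValue e P = 0 := by
  refine MvPolynomial.funext fun z => ?_
  rw [map_zero, ← MvPolynomial.aeval_eq_eval, aeval_genericToralValue, mul_eq_zero]
  refine or_iff_not_imp_left.2 fun hdet => ?_
  obtain ⟨g, hg⟩ := (isUnit_iff_isUnit_det _).2 (isUnit_iff_ne_zero.2 hdet)
  rw [← hg]
  exact hP _ _ (isConjZeroExtension_toralPoint_units e g _)

omit [DecidableEq n] in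
theorem aeval_entries_eq_zero_of_isConjZeroExtension_signedDiagonal [Infinite k] [Algebra k K]
    (e : ι ⊕ ι ↪ n) {P : MvPolynomial (n × n) k}
    (hP : ∀ (μ : ι → k) (M : Matrix n n k), IsConjZeroExtension (signedDiagonal μ) M →
      MvPolynomial.eval (fun q => M q.1 q.2) P = 0)
    {μ : ι → K} {M : Matrix n n K} (hM : IsConjZeroExtension (signedDiagonal μ) M) :
    MvPolynomial.aeval (fun q => M q.1 q.2) P = 0 := by
  classical
  obtain ⟨g, μ', rfl⟩ := exists_eq_toralPoint_units e hM
  have hzero := aeval_genericToralValue e P (Sum.elim (fun q => g.val q.1 q.2) μ')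
  rw [genericToralValue_eq_zero e hP, map_zero, eq_comm, mul_eq_zero] at hzero
  exact hzero.resolve_left ((isUnit_iff_isUnit_det _).1 g.isUnit).ne_zero

end BaseChange

section ZariskiClosure

variable {R : Type*} [CommRing R] {N : ℕ} {S T : Set (Matrix (Fin N) (Fin N) R)}

theorem zClosure_mono (h : S ⊆ T) : zClosure S ⊆ zClosure T :=
  fun _ hM P hP => hM P fun x hx => hP x (h hx)

theorem zClosure_subset_zClosure (h : S ⊆ zClosure T) : zClosure S ⊆ zClosure T :=
  fun _ hM P hP => hM P fun _ hx => h hx P hP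

end ZariskiClosure

section SecantVariety

variable {k : Type*} [Field k] {N r : ℕ}

theorem exists_isConjZeroExtension_signedDiagonal_map {R K L ι n : Type*} [CommRing R] [Field K]
    [Field L] [IsAlgClosed K] [NeZero (2 : K)] [Fintype ι] [DecidableEq ι] [Fintype n]
    {A C : Matrix n ι R} {B E : Matrix ι n R} (hBA : B * A = 0) (hEC : E * C = 0)
    {φ : R →+* K} (hφ : Function.Injective φ) (ψ : R →+* L)
    (hunit : IsUnit ((B * C * (E * A)).map ψ))
    (hsep : ((B * C * (E * A)).map ψ).charpoly.Separable) :
    ∃ μ : ι → K, IsConjZeroExtension (signedDiagonal μ) ((A * B + C * E).map φ) := by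
  have hsepK : ((B * C * (E * A)).map φ).charpoly.Separable := by
    rw [charpoly_map] at hsep ⊢
    exact separable_map_of_injective hφ ψ (charpoly_monic _) hsep
  have hunitK : IsUnit ((B * C * (E * A)).map φ) := by
    rw [isUnit_iff_isUnit_det, isUnit_iff_ne_zero, ← RingHom.mapMatrix_apply, ← RingHom.map_det]
      at hunit ⊢
    exact fun h => hunit (by rw [(map_eq_zero_iff φ hφ).1 h, map_zero])
  simp only [Matrix.map_mul] at hunitK hsepK
  rw [Matrix.map_add φ (map_add φ), Matrix.map_mul, Matrix.map_mul]
  refine exists_isConjZeroExtension_signedDiagonal_mul_add_mul ?_ ?_ hunitK hsepK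
  · rw [← Matrix.map_mul, hBA, Matrix.map_zero _ (map_zero φ)]
  · rw [← Matrix.map_mul, hEC, Matrix.map_zero _ (map_zero φ)]

/-- `R` plays the role of the coordinate ring of an irreducible parameter space: since `AB + CE` is
diagonalizable over the algebraic closure of its fraction field as soon as the specialization `f`
is good enough, every other specialization `g` is a limit of matrices in `toralConjugates`. -/
theorem map_mem_zClosure_toralConjugates [Infinite k] [NeZero (2 : k)] (h2r : 2 * r ≤ N)
    {R : Type*} [CommRing R] [IsDomain R] [Algebra k R] {A C : Matrix (Fin N) (Fin r) R}
    {B E : Matrix (Fin r) (Fin N) R} (hBA : B * A = 0) (hEC : E * C = 0) (f g : R →ₐ[k] k)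
    (hunit : IsUnit ((B * C * (E * A)).map f))
    (hsep : ((B * C * (E * A)).map f).charpoly.Separable) :
    (A * B + C * E).map g ∈ zClosure (toralConjugates k N r) := by
  intro P hP
  let K := AlgebraicClosure (FractionRing R)
  let φ : R →ₐ[k] K := IsScalarTower.toAlgHom k R K
  have hφ : Function.Injective φ :=
    (algebraMap (FractionRing R) K).injective.comp (IsFractionRing.injective R (FractionRing R))
  have : NeZero (2 : K) := NeZero.nat_of_injective (n := 2) (algebraMap k K).injective
  obtain ⟨μ, hμ⟩ := exists_isConjZeroExtension_signedDiagonal_map hBA hEC (φ := φ.toRingHom) hφ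
    f.toRingHom hunit hsep
  have hgeneric : MvPolynomial.aeval (fun q => (A * B + C * E) q.1 q.2) P = 0 := by
    refine hφ ?_
    rw [map_zero, map_aeval_entries]
    exact aeval_entries_eq_zero_of_isConjZeroExtension_signedDiagonal (outerEmb h2r)
      (fun ν M hM => hP M ((mem_toralConjugates_iff h2r).2 ⟨ν, hM⟩)) hμ
  rw [← MvPolynomial.aeval_eq_eval, ← map_aeval_entries, hgeneric, map_zero]

/-- The element `w` moves the frame `(A, F)`, with dual `(G, B)`, to `(F Z, A)`, with dual
`(Z⁻¹ B, G)`. -/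
theorem exists_units_mul_units_mul_eq {n ι : Type*} [Fintype n] [DecidableEq n] [Fintype ι]
    [DecidableEq ι] {A F : Matrix n ι k} {G B : Matrix ι n k}
    (h : fromRows G B * fromCols A F = 1) (Z : (Matrix ι ι k)ˣ) :
    ∃ w : (Matrix n n k)ˣ, B * w.val * A = Z ∧ B * (w⁻¹).val * A = 1 := by
  obtain ⟨hGA, hGF, hBA, hBF⟩ := fromRows_mul_fromCols_eq_one_iff.1 h
  have h' : fromRows ((Z⁻¹).val * B) G * fromCols (F * Z.val) A = 1 := by
    refine fromRows_mul_fromCols_eq_one_iff.2 ⟨?_, ?_, ?_, hGA⟩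
    · rw [Matrix.mul_assoc, ← Matrix.mul_assoc B, hBF, Matrix.one_mul, Units.inv_mul]
    · rw [Matrix.mul_assoc, hBA, Matrix.mul_zero]
    · rw [← Matrix.mul_assoc, hGF, Matrix.zero_mul]
  obtain ⟨w, hP, hQ⟩ := exists_units_mul_eq_of_mul_eq_one h h'
  rw [mul_fromCols, fromCols_inj.eq_iff] at hP
  rw [fromRows_mul, fromRows_inj.eq_iff] at hQ
  refine ⟨w, ?_, ?_⟩
  · rw [Matrix.mul_assoc, hP.1, ← Matrix.mul_assoc, hBF, Matrix.one_mul]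
  · rw [← hQ.2, Matrix.mul_assoc G, Units.mul_inv, Matrix.mul_one, hGA]

theorem exists_injective_ne_zero [Infinite k] (ι : Type*) [Finite ι] :
    ∃ lam : ι → k, Function.Injective lam ∧ ∀ i, lam i ≠ 0 := by
  obtain ⟨lam⟩ : Nonempty (ι ↪ ({0}ᶜ : Set k)) := by
    have := (Set.finite_singleton (0 : k)).infinite_compl.to_subtype
    exact ⟨(Finite.equivFin ι).toEmbedding.trans
      (Fin.valEmbedding.trans (Infinite.natEmbedding _))⟩
  exact ⟨_, Subtype.val_injective.comp lam.injective, fun i => (lam i).2⟩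

theorem exists_units_separable_charpoly_smul [Infinite k] (ι : Type*) [Fintype ι]
    [DecidableEq ι] : ∃ Z : (Matrix ι ι k)ˣ, ∀ c : k, c ≠ 0 → (c • Z.val).charpoly.Separable := by
  obtain ⟨lam, hinj, hne⟩ := exists_injective_ne_zero (k := k) ι
  obtain ⟨Z, hZ⟩ := isUnit_diagonal.2 (Pi.isUnit_iff.2 fun i => isUnit_iff_ne_zero.2 (hne i))
  refine ⟨Z, fun c hc => ?_⟩
  rw [hZ, ← diagonal_smul, charpoly_diagonal, Polynomial.separable_prod_X_sub_C_iff]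
  exact fun i j hij => hinj (mul_left_cancel₀ hc hij)

theorem exists_isUnit_and_separable_charpoly_mul_adjugate [Infinite k] {n ι : Type*} [Fintype n]
    [DecidableEq n] [Fintype ι] [DecidableEq ι] {A F : Matrix n ι k} {G B : Matrix ι n k}
    (h : fromRows G B * fromCols A F = 1) {c : k} (hc : c ≠ 0) :
    ∃ W : Matrix n n k, IsUnit (B * (W * A) * (c • B * W.adjugate * A)) ∧
      (B * (W * A) * (c • B * W.adjugate * A)).charpoly.Separable := by
  obtain ⟨Z, hZ⟩ := exists_units_separable_charpoly_smul (k := k) ι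
  obtain ⟨w, hw, hw'⟩ := exists_units_mul_units_mul_eq h Z
  have hcw : c * w.val.det ≠ 0 := mul_ne_zero hc ((isUnit_iff_isUnit_det _).1 w.isUnit).ne_zero
  have hmul : B * (w.val * A) * (c • B * w.val.adjugate * A) = (c * w.val.det) • Z.val := by
    rw [adjugate_units, Matrix.mul_smul, Matrix.smul_mul, Matrix.smul_mul, Matrix.smul_mul, hw',
      Matrix.mul_smul, Matrix.mul_smul, Matrix.mul_one, ← Matrix.mul_assoc, hw, smul_smul, mul_comm]
  refine ⟨w, ?_, ?_⟩
  · rw [hmul]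
    exact Z.isUnit.smul (Units.mk0 _ hcw)
  · rw [hmul]
    exact hZ _ hcw

theorem add_smul_mul_adjugate_mem_zClosure_toralConjugates [Infinite k] [NeZero (2 : k)]
    (h2r : 2 * r ≤ N) {A F : Matrix (Fin N) (Fin r) k} {G B : Matrix (Fin r) (Fin N) k}
    (h : fromRows G B * fromCols A F = 1) {c : k} (hc : c ≠ 0) (M : Matrix (Fin N) (Fin N) k) :
    A * B + c • (M * (A * B) * M.adjugate) ∈ zClosure (toralConjugates k N r) := by
  obtain ⟨-, -, hBA, -⟩ := fromRows_mul_fromCols_eq_one_iff.1 h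
  obtain ⟨W, hunit, hsep⟩ := exists_isUnit_and_separable_charpoly_mul_adjugate h hc
  let R := MvPolynomial (Fin N × Fin N) k
  let Γ : Matrix (Fin N) (Fin N) R := mvPolynomialX (Fin N) (Fin N) k
  let ι : k →+* R := algebraMap k R
  let ev (M : Matrix (Fin N) (Fin N) k) : R →ₐ[k] k := MvPolynomial.aeval fun q => M q.1 q.2
  have hΓ (M : Matrix (Fin N) (Fin N) k) : Γ.map (ev M) = M := mvPolynomialX_mapMatrix_aeval k M
  have hadj (M : Matrix (Fin N) (Fin N) k) : Γ.adjugate.map (ev M) = M.adjugate := by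
    rw [← AlgHom.mapMatrix_apply, AlgHom.map_adjugate, AlgHom.mapMatrix_apply, hΓ]
  have hι (M) {m n : Type} (X : Matrix m n k) : (X.map ι).map (ev M) = X := by
    ext; exact (ev M).commutes _
  have hBAR : B.map ι * A.map ι = 0 := by
    rw [← Matrix.map_mul, hBA, Matrix.map_zero _ (map_zero ι)]
  have hEC : (c • B).map ι * Γ.adjugate * (Γ * A.map ι) = 0 := by
    rw [Matrix.mul_assoc, ← Matrix.mul_assoc Γ.adjugate, adjugate_mul, Matrix.smul_mul,
      Matrix.one_mul, Matrix.mul_smul, ← Matrix.map_mul, Matrix.smul_mul, hBA, smul_zero,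
      Matrix.map_zero _ (map_zero ι), smul_zero]
  have hspec (M : Matrix (Fin N) (Fin N) k) :
      (A.map ι * B.map ι + Γ * A.map ι * ((c • B).map ι * Γ.adjugate)).map (ev M) =
        A * B + c • (M * (A * B) * M.adjugate) := by
    rw [Matrix.map_add _ (map_add _)]
    simp only [Matrix.map_mul, hΓ, hadj, hι, Matrix.mul_assoc, Matrix.mul_smul, Matrix.smul_mul]
  have hgood : (B.map ι * (Γ * A.map ι) * ((c • B).map ι * Γ.adjugate * A.map ι)).map (ev W) =
      B * (W * A) * (c • B * W.adjugate * A) := by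
    simp only [Matrix.map_mul, hΓ, hadj, hι]
  rw [← hspec]
  exact map_mem_zClosure_toralConjugates h2r hBAR hEC (ev W) (ev M) (hgood ▸ hunit) (hgood ▸ hsep)

theorem add_mem_zClosure_toralConjugates [Infinite k] [NeZero (2 : k)] (h2r : 2 * r ≤ N)
    {x y : Matrix (Fin N) (Fin N) k} (hx : x ∈ jordanOrbit k N (twoOneLam N r))
    (hy : y ∈ jordanOrbit k N (twoOneLam N r)) :
    x + y ∈ zClosure (toralConjugates k N r) := by
  rw [mem_jordanOrbit_iff_isConjZeroExtension h2r] at hx hy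
  obtain ⟨h, rfl⟩ := hx.exists_eq_units_conj hy
  obtain ⟨A, F, G, B, hframe, rfl⟩ := isConjZeroExtension_squareZeroBlock_iff_exists_mul.1 hx
  have hdet : h.val.det ≠ 0 := ((isUnit_iff_isUnit_det _).1 h.isUnit).ne_zero
  have hmem :=
    add_smul_mul_adjugate_mem_zClosure_toralConjugates h2r hframe (inv_ne_zero hdet) h.val
  rwa [adjugate_units, Matrix.mul_smul, inv_smul_smul₀ hdet] at hmem

end SecantVariety

theorem stmt14_general {k : Type*} [Field k] [Infinite k] [NeZero (2 : k)] {N r : ℕ}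
    (h2r : 2 * r ≤ N) :
    zClosure (Set.image2 (· + ·) (jordanOrbit k N (twoOneLam N r))
        (jordanOrbit k N (twoOneLam N r)))
      = zClosure {M : Matrix (Fin N) (Fin N) k |
          ∃ g : (Matrix (Fin N) (Fin N) k)ˣ, ∃ μ : Fin r → k,
            M = (g : Matrix (Fin N) (Fin N) k) * Matrix.diagonal (dvec N r μ) *
              ((g⁻¹ : (Matrix (Fin N) (Fin N) k)ˣ) : Matrix (Fin N) (Fin N) k)} :=
  (zClosure_subset_zClosure <| Set.image2_subset_iff.2 fun _ hx _ hy =>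
    add_mem_zClosure_toralConjugates h2r hx hy).antisymm
    (zClosure_mono (toralConjugates_subset_image2_add h2r))

/-- For `λ = (2^r, 1^{N−2r})`, the conical secant variety of `O_λ` is the closure of the
union of the `GL_N`-conjugates of the `r`-dimensional toral subspace
`{diag(μ₁, …, μ_r, 0, …, 0, −μ_r, …, −μ₁)}`. -/
theorem stmt14 {k : Type*} [Field k] [IsAlgClosed k] [CharZero k]
    {N r : ℕ} (hr : 1 ≤ r) (h2r : 2 * r ≤ N) :
    zClosure (Set.image2 (· + ·) (jordanOrbit k N (twoOneLam N r))
        (jordanOrbit k N (twoOneLam N r)))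
      = zClosure {M : Matrix (Fin N) (Fin N) k |
          ∃ g : (Matrix (Fin N) (Fin N) k)ˣ, ∃ μ : Fin r → k,
            M = (g : Matrix (Fin N) (Fin N) k) * Matrix.diagonal (dvec N r μ) *
              ((g⁻¹ : (Matrix (Fin N) (Fin N) k)ˣ) : Matrix (Fin N) (Fin N) k)} :=
  stmt14_general h2r
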